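/- Let q ∈ M be a projection and x ∈ M arbitrary. Then ‖(1 − q)x‖₂² ≤ ‖xx* − q‖₂. Similarly, for a projection p ∈ M, ‖x(1 − p)‖₂² ≤ ‖x*x − p‖₂. -/

import Mathlib

/-!
Put `e = 1 - q` and `d = x x* - q`. Traciality and `e q = 0` give `‖e x‖₂² = τ(e d)`, and the
Cauchy–Schwarz inequality bounds this by `‖e‖₂ ‖d‖₂ ≤ ‖d‖₂`, since `τ(e) = 1 - τ(q) ≤ 1`.
Cauchy–Schwarz is used in the form `0 ≤ τ((d - t e)²)` with the real number `t = Re τ(e d)`.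
The second inequality is the first one applied to `x*`, because `‖y*‖₂ = ‖y‖₂` for a trace.
-/

open scoped ComplexOrder

/-- The tracial 2-norm `‖x‖₂ = (τ(x*x))^{1/2}` associated to a linear functional `τ`. -/
noncomputable def tnorm {M : Type*} [Ring M] [StarRing M] [Algebra ℂ M]
    (τ : M →ₗ[ℂ] ℂ) (x : M) : ℝ :=
  Real.sqrt (τ (star x * x)).re

theorem tnorm_star {M : Type*} [CStarAlgebra M] (τ : M →ₗ[ℂ] ℂ)
    (hτtr : ∀ x y : M, τ (x * y) = τ (y * x)) (y : M) : tnorm τ (star y) = tnorm τ y := by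
  unfold tnorm
  rw [star_star, hτtr]

theorem tnorm_compl_mul_sq_le {M : Type*} [CStarAlgebra M]
    (τ : M →ₗ[ℂ] ℂ) (hτ1 : τ 1 = 1)
    (hτpos : ∀ x : M, 0 ≤ τ (star x * x))
    (hτtr : ∀ x y : M, τ (x * y) = τ (y * x))
    (q : M) (hq1 : star q = q) (hq2 : q * q = q) (x : M) :
    tnorm τ ((1 - q) * x) ^ 2 ≤ tnorm τ (x * star x - q) := by
  have hre : ∀ y : M, 0 ≤ (τ (star y * y)).re := fun y => (Complex.le_def.1 (hτpos y)).1
  set d := x * star x - q with hd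
  set e := 1 - q with he
  have hds : star d = d := by simp [hd, hq1]
  have hes : star e = e := by simp [he, hq1]
  have hee : e * e = e := by simp [he, mul_sub, sub_mul, hq2]
  have heq : e * q = 0 := by simp [he, sub_mul, hq2]
  have hex : τ (star (e * x) * (e * x)) = τ (e * d) := by
    have h1 : star (e * x) * (e * x) = star x * (e * x) := by
      rw [star_mul, hes, mul_assoc, ← mul_assoc e e x, hee]
    rw [h1, hτtr, hd, mul_sub, heq, sub_zero, mul_assoc]
  have hle : (τ e).re ≤ 1 := by
    have h := hre q
    rw [hq1, hq2] at h
    simp [he, hτ1, h]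
  unfold tnorm
  rw [Real.sq_sqrt (hre _), hex, hds]
  apply Real.le_sqrt_of_sq_le
  set t := (τ (e * d)).re with ht
  have hexp : star (d - (t : ℂ) • e) * (d - (t : ℂ) • e)
      = d * d - (t : ℂ) • (d * e) - (t : ℂ) • (e * d) + ((t : ℂ) * t) • e := by
    simp only [star_sub, star_smul, hds, hes, sub_mul, mul_sub, smul_mul_assoc, mul_smul_comm,
      hee, smul_sub, smul_smul, Complex.star_def, Complex.conj_ofReal]
    abel
  have h := hre (d - (t : ℂ) • e)
  rw [hexp, map_add, map_sub, map_sub, map_smul, map_smul, map_smul, hτtr d e] at h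
  simp only [smul_eq_mul, Complex.add_re, Complex.sub_re, ← Complex.ofReal_mul,
    Complex.re_ofReal_mul, ← ht] at h
  nlinarith [mul_le_mul_of_nonneg_left hle (mul_self_nonneg t)]

theorem stmt3 {M : Type*} [CStarAlgebra M]
    (τ : M →ₗ[ℂ] ℂ) (hτ1 : τ 1 = 1)
    (hτpos : ∀ x : M, 0 ≤ τ (star x * x))
    (hτtr : ∀ x y : M, τ (x * y) = τ (y * x))
    (p q : M) (hp1 : star p = p) (hp2 : p * p = p) (hq1 : star q = q) (hq2 : q * q = q)
    (x : M) :
    tnorm τ ((1 - q) * x) ^ 2 ≤ tnorm τ (x * star x - q) ∧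
      tnorm τ (x * (1 - p)) ^ 2 ≤ tnorm τ (star x * x - p) := by
  refine ⟨tnorm_compl_mul_sq_le τ hτ1 hτpos hτtr q hq1 hq2 x, ?_⟩
  have h := tnorm_compl_mul_sq_le τ hτ1 hτpos hτtr p hp1 hp2 (star x)
  rw [← tnorm_star τ hτtr] at h
  simpa [hp1] using h
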